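/- arXiv:1808.03764 — 2 statements merged into one kernel-verified Lean document; each statement's English description precedes it below -/
import Mathlib

section
/- For every n ≥ 0 and for each pattern τ ∈ {132, 213}, Σ_{σ ∈ S_n(τ)} q^{exc(σ)} p^{crs(σ)} = C_n(q,p) as polynomials in q and p, where C_n(q,p) are the q,p-Catalan polynomials of Randrianarivony. -/
open Equiv Finset

/-- Number of crossings of a permutation of `Fin n` (0-indexed version of the
classical definition on `[n] = {1,…,n}`): pairs `(i,j)` with
`i<j<σ(i)<σ(j)` or `σ(i)<σ(j)≤i<j`. -/
def crs {n : ℕ} (σ : Equiv.Perm (Fin n)) : ℕ :=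
  (Finset.univ.filter (fun q : Fin n × Fin n =>
    ((q.1 : ℕ) < q.2 ∧ (q.2 : ℕ) < σ q.1 ∧ (σ q.1 : ℕ) < σ q.2) ∨
    ((σ q.1 : ℕ) < σ q.2 ∧ (σ q.2 : ℕ) ≤ q.1 ∧ (q.1 : ℕ) < q.2))).card

/-- Number of nestings of a permutation of `Fin n`: pairs `(i,j)` with
`i<j<σ(j)<σ(i)` or `σ(j)<σ(i)≤i<j`. -/
def nes {n : ℕ} (σ : Equiv.Perm (Fin n)) : ℕ :=
  (Finset.univ.filter (fun q : Fin n × Fin n =>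
    ((q.1 : ℕ) < q.2 ∧ (q.2 : ℕ) < σ q.2 ∧ (σ q.2 : ℕ) < σ q.1) ∨
    ((σ q.2 : ℕ) < σ q.1 ∧ (σ q.1 : ℕ) ≤ q.1 ∧ (q.1 : ℕ) < q.2))).card

/-- Number of fixed points. -/
def fp {n : ℕ} (σ : Equiv.Perm (Fin n)) : ℕ :=
  (Finset.univ.filter (fun i : Fin n => σ i = i)).card

/-- Number of excedances. -/
def exc {n : ℕ} (σ : Equiv.Perm (Fin n)) : ℕ :=
  (Finset.univ.filter (fun i : Fin n => (i : ℕ) < σ i)).card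

/-- Number of inversions. -/
def invStat {n : ℕ} (σ : Equiv.Perm (Fin n)) : ℕ :=
  (Finset.univ.filter (fun q : Fin n × Fin n => q.1 < q.2 ∧ σ q.2 < σ q.1)).card

/-- `σ` contains the pattern `τ`: there is a strictly increasing choice of positions
on which `σ` is order-isomorphic to `τ`. -/
def Contains {n k : ℕ} (σ : Equiv.Perm (Fin n)) (τ : Equiv.Perm (Fin k)) : Prop :=
  ∃ f : Fin k → Fin n, StrictMono f ∧ ∀ a b : Fin k, σ (f a) < σ (f b) ↔ τ a < τ b

/-- `σ` avoids the pattern `τ`. -/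
def Avoids {n k : ℕ} (σ : Equiv.Perm (Fin n)) (τ : Equiv.Perm (Fin k)) : Prop :=
  ¬ Contains σ τ

/-- The pattern 123 (as a permutation of `Fin 3`, 0-indexed). -/
def p123 : Equiv.Perm (Fin 3) := 1
/-- The pattern 132. -/
def p132 : Equiv.Perm (Fin 3) := Equiv.swap 1 2
/-- The pattern 213. -/
def p213 : Equiv.Perm (Fin 3) := Equiv.swap 0 1
/-- The pattern 321. -/
def p321 : Equiv.Perm (Fin 3) := Equiv.swap 0 2
/-- The pattern 231. -/
def p231 : Equiv.Perm (Fin 3) := Equiv.swap 0 2 * Equiv.swap 0 1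
/-- The pattern 312. -/
def p312 : Equiv.Perm (Fin 3) := Equiv.swap 0 2 * Equiv.swap 1 2

open MvPolynomial in
/-- The q,p-Catalan polynomials of Randrianarivony, as polynomials in two variables
`q = X true` and `p = X false`:
`C 0 = C 1 = 1` and `C (n+2) = C (n+1) + q * Σ_{k=0}^{n} p^k C k C (n+1-k)`. -/
noncomputable def qpCatalan : ℕ → MvPolynomial Bool ℤ
  | 0 => 1
  | 1 => 1
  | n + 2 => qpCatalan (n + 1) + (X true : MvPolynomial Bool ℤ) *
      ∑ k ∈ (Finset.range (n + 1)).attach,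
        (X false : MvPolynomial Bool ℤ) ^ (k : ℕ) * qpCatalan k * qpCatalan (n + 1 - k)
  termination_by n => n
  decreasing_by
  · omega
  · have := Finset.mem_range.mp k.2; omega
  · omega

/-!
Cutting a 132-avoiding permutation at its maximum leaves two 132-avoiding blocks, each of which is
shifted with respect to its own diagonal. The statistics are therefore followed for permutations
with values shifted by `d`: their generating function is a weighted sum over the noncrossing perfect
matchings of the integers in `[1 - d - n, 1 - d + n)`, in which the arc standing for the maximum has
the weight that the maximum contributes.

For `d = 0`, read these integers outward, in the order `0, 1, -1, 2, -2, …`. After adjoining a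
square root `r` of `p`, the weight of an arc is a factor of the endpoint read first (which opens the
arc) times a factor of the other one (which closes it). Hence the total weights of the partial
matchings of an interval, sorted by their number of open arcs, change in the same way whether the
next point is added at the left or at the right end, and the integers may be relabelled
`0, 1, 2, 3, 4, …` in reading order. The relabelled weight is invariant under translation by `2`, so
cutting the matchings that start at `0` and at `1` at their first arc gives two intertwined
Catalan-like recursions, from which the recursion of the `q,p`-Catalan polynomials follows.

The pattern 213 is the image of 132 under reflection in the antidiagonal, which preserves both
statistics.
-/

section MatchingSum

variable {K : Type*} [CommSemiring K] {w v : ℤ → ℤ → K}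

/-- The sum, over the noncrossing perfect matchings of the `2 * n` consecutive integers starting
at `a`, of the product of the weights `w x y` of the arcs `x < y`. It is defined by recursion on
the arc that starts at `a`. -/
def matchingSum (w : ℤ → ℤ → K) (a : ℤ) : ℕ → K
  | 0 => 1
  | n + 1 => ∑ k : Fin (n + 1), w a (a + 2 * k + 1) *
      (matchingSum w (a + 1) k * matchingSum w (a + 2 * k + 2) (n - k))

theorem matchingSum_succ (w : ℤ → ℤ → K) (a : ℤ) (n : ℕ) :
    matchingSum w a (n + 1) = ∑ x ∈ antidiagonal n, w a (a + 2 * x.1 + 1) *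
      (matchingSum w (a + 1) x.1 * matchingSum w (a + 2 * x.1 + 2) x.2) := by
  rw [matchingSum, Nat.sum_antidiagonal_eq_sum_range_succ_mk, sum_range]

theorem matchingSum_add_eq_of_forall {t : ℤ} (h : ∀ x y, v (x + t) (y + t) = w x y) (a : ℤ)
    (n : ℕ) : matchingSum v (a + t) n = matchingSum w a n := by
  induction n using Nat.strong_induction_on generalizing a with
  | _ n ih =>
    cases n with
    | zero => simp only [matchingSum]
    | succ n =>
      rw [matchingSum_succ, matchingSum_succ]
      refine sum_congr rfl fun x hx => ?_
      rw [HasAntidiagonal.mem_antidiagonal] at hx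
      rw [← h, ← ih x.1 (by omega), ← ih x.2 (by omega)]
      ring_nf

theorem matchingSum_succ_of_periodic (h : ∀ x y, w (x + 2) (y + 2) = w x y) (a : ℤ) (n : ℕ) :
    matchingSum w a (n + 1) = ∑ x ∈ antidiagonal n, w a (a + 2 * x.1 + 1) *
      (matchingSum w (a + 1) x.1 * matchingSum w a x.2) := by
  have hshift : ∀ k m : ℕ, matchingSum w (a + 2 * k + 2) m = matchingSum w a m := by
    intro k m
    induction k with
    | zero => simpa using matchingSum_add_eq_of_forall h a m
    | succ k ih =>
      rw [← ih, ← matchingSum_add_eq_of_forall h (a + 2 * k + 2)]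
      congr 1
      push_cast
      ring
  simp only [matchingSum_succ, hshift]

/-- The total weight of the noncrossing perfect matchings of the integers in `[a, b)`. -/
def matchingSeries (w : ℤ → ℤ → K) : IncidenceAlgebra K ℤ where
  toFun a b := if a ≤ b ∧ Even (b - a) then matchingSum w a ((b - a) / 2).toNat else 0
  eq_zero_of_not_le' _ _ h := if_neg fun h' => h h'.1

/-- The total weight of the configurations of `f` on `[a + 1, b - 1)` covered by an arc from `a`
to `b - 1`. -/
def arcOver (w : ℤ → ℤ → K) (f : IncidenceAlgebra K ℤ) : IncidenceAlgebra K ℤ where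
  toFun a b := w a (b - 1) * f (a + 1) (b - 1)
  eq_zero_of_not_le' _ _ h := by
    rw [IncidenceAlgebra.apply_eq_zero_of_not_le (by omega), mul_zero]

/-- The total weight of the configurations on `[a, b)` consisting of a single point, where the
point `a` has weight `o a`. -/
def singlePoint (o : ℤ → K) : IncidenceAlgebra K ℤ where
  toFun a b := if b = a + 1 then o a else 0
  eq_zero_of_not_le' _ _ h := if_neg (by omega)

theorem arcOver_apply (w : ℤ → ℤ → K) (f : IncidenceAlgebra K ℤ) (a b : ℤ) :
    arcOver w f a b = w a (b - 1) * f (a + 1) (b - 1) := rfl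

theorem matchingSeries_add_two_mul (w : ℤ → ℤ → K) (a : ℤ) (n : ℕ) :
    matchingSeries w a (a + 2 * n) = matchingSum w a n := by
  rw [matchingSeries, IncidenceAlgebra.coe_mk, if_pos ⟨by omega, by simp⟩]
  congr
  omega

theorem matchingSeries_apply_of_odd (w : ℤ → ℤ → K) {a b : ℤ} (h : Odd (b - a)) :
    matchingSeries w a b = 0 :=
  if_neg fun h' => Int.not_even_iff_odd.mpr h h'.2

theorem arcOver_apply_of_le_add_one (w : ℤ → ℤ → K) (f : IncidenceAlgebra K ℤ) {a b : ℤ}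
    (h : b ≤ a + 1) : arcOver w f a b = 0 := by
  rw [arcOver_apply, IncidenceAlgebra.apply_eq_zero_of_not_le (by omega), mul_zero]

theorem singlePoint_mul_apply (o : ℤ → K) (f : IncidenceAlgebra K ℤ) (a b : ℤ) :
    (singlePoint o * f) a b = o a * f (a + 1) b := by
  rw [IncidenceAlgebra.mul_apply, sum_eq_single (a + 1)]
  · simp [singlePoint]
  · intro x _ hx
    simp [singlePoint, hx]
  · intro h
    rw [IncidenceAlgebra.apply_eq_zero_of_not_le (f := f) (by simpa using h), mul_zero]

theorem mul_singlePoint_apply (o : ℤ → K) (f : IncidenceAlgebra K ℤ) (a b : ℤ) :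
    (f * singlePoint o) a (b + 1) = f a b * o b := by
  rw [IncidenceAlgebra.mul_apply, sum_eq_single b]
  · simp [singlePoint]
  · intro x _ hx
    simp [singlePoint, hx.symm]
  · intro h
    rw [IncidenceAlgebra.apply_eq_zero_of_not_le (f := f) fun h' => h (by simp [h']), zero_mul]

theorem arcOver_mul_matchingSeries_apply (w : ℤ → ℤ → K) (a : ℤ) (n : ℕ) :
    (arcOver w (matchingSeries w) * matchingSeries w) a (a + 2 * (n + 1 : ℕ)) =
      matchingSum w a (n + 1) := by
  rw [IncidenceAlgebra.mul_apply, matchingSum_succ]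
  refine (sum_of_injOn (fun x => a + 2 * x.1 + 2) ?_ ?_ ?_ ?_).symm
  · rintro ⟨k, m⟩ h ⟨k', m'⟩ h' hk
    simp only [mem_coe, HasAntidiagonal.mem_antidiagonal] at h h' hk
    ext <;> simp only <;> omega
  · intro x hx
    simp only [mem_coe, HasAntidiagonal.mem_antidiagonal, mem_Icc] at hx ⊢
    omega
  · intro c hc hc'
    rcases Int.even_or_odd (c - a) with ⟨j, hj⟩ | hodd
    · rcases eq_or_ne j 0 with rfl | hj₀
      · rw [arcOver_apply_of_le_add_one _ _ (by omega), zero_mul]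
      · rw [mem_Icc] at hc
        refine absurd ⟨((j - 1).toNat, n - (j - 1).toNat), ?_, ?_⟩ hc'
        · simp only [mem_coe, HasAntidiagonal.mem_antidiagonal]
          omega
        · simp only
          omega
    · rw [arcOver_apply, matchingSeries_apply_of_odd w (by grind), mul_zero, zero_mul]
  · rintro ⟨k, m⟩ hx
    rw [HasAntidiagonal.mem_antidiagonal] at hx
    rw [← mul_assoc, arcOver_apply, ← matchingSeries_add_two_mul, ← matchingSeries_add_two_mul]
    congr 3 <;> grind

theorem arcOver_mul_matchingSeries_apply_of_odd (w : ℤ → ℤ → K) {a b : ℤ} (h : Odd (b - a)) :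
    (arcOver w (matchingSeries w) * matchingSeries w) a b = 0 := by
  rw [IncidenceAlgebra.mul_apply]
  refine sum_eq_zero fun c _ => ?_
  rcases Int.even_or_odd (b - c) with hc | hc
  · rw [arcOver_apply, matchingSeries_apply_of_odd w (by grind), mul_zero, zero_mul]
  · rw [matchingSeries_apply_of_odd w hc, mul_zero]

theorem matchingSeries_eq_one_add_arcOver_mul (w : ℤ → ℤ → K) :
    matchingSeries w = 1 + arcOver w (matchingSeries w) * matchingSeries w := by
  refine IncidenceAlgebra.ext fun a b hab => ?_
  rw [IncidenceAlgebra.add_apply, IncidenceAlgebra.one_apply]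
  rcases Int.even_or_odd (b - a) with ⟨j, hj⟩ | hodd
  · obtain ⟨n, rfl⟩ : ∃ n : ℕ, b = a + 2 * n := ⟨j.toNat, by omega⟩
    rw [matchingSeries_add_two_mul]
    cases n with
    | zero =>
      simp [matchingSum, IncidenceAlgebra.mul_apply, arcOver_apply_of_le_add_one]
    | succ n =>
      rw [if_neg (by omega), zero_add, arcOver_mul_matchingSeries_apply]
  · rw [matchingSeries_apply_of_odd w hodd, arcOver_mul_matchingSeries_apply_of_odd w hodd,
      if_neg (by grind), zero_add]

theorem incidenceAlgebra_eq_zero_of_eq_mul {f g : IncidenceAlgebra K ℤ} (hf : ∀ a, f a a = 0)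
    (h : g = f * g) : g = 0 := by
  have key : ∀ n : ℕ, ∀ a b : ℤ, b - a ≤ n → g a b = 0 := by
    intro n
    induction n with
    | zero =>
      intro a b hab
      rcases (show b ≤ a by omega).lt_or_eq with hlt | rfl
      · exact IncidenceAlgebra.apply_eq_zero_of_not_le hlt.not_ge g
      · rw [h, IncidenceAlgebra.mul_apply, Icc_self, sum_singleton, hf, zero_mul]
    | succ n ih =>
      intro a b hab
      rw [h, IncidenceAlgebra.mul_apply]
      refine sum_eq_zero fun x hx => ?_
      rcases (mem_Icc.mp hx).1.eq_or_lt with rfl | hax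
      · rw [hf, zero_mul]
      · rw [ih x b (by omega), mul_zero]
  exact IncidenceAlgebra.ext fun a b _ => key (b - a).toNat a b (by omega)

end MatchingSum

section OpenMatchingSeries

variable {K : Type*} [CommRing K] {w : ℤ → ℤ → K}

theorem matchingSeries_eq_one_add_mul_arcOver (w : ℤ → ℤ → K) :
    matchingSeries w = 1 + matchingSeries w * arcOver w (matchingSeries w) := by
  set S := matchingSeries w
  set A := arcOver w S
  have hS : S = 1 + A * S := matchingSeries_eq_one_add_arcOver_mul w
  have hE : S - (1 + S * A) = A * (S - (1 + S * A)) :=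
    calc S - (1 + S * A) = (S - 1) - A - (S - 1) * A := by rw [sub_mul, one_mul]; abel
      _ = A * S - A - A * S * A := by rw [sub_eq_of_eq_add' hS]
      _ = A * (S - (1 + S * A)) := by rw [mul_sub, mul_add, mul_one, mul_assoc]; abel
  exact sub_eq_zero.mp <|
    incidenceAlgebra_eq_zero_of_eq_mul (fun a => arcOver_apply_of_le_add_one w _ (by omega)) hE

/-- The total weight of the noncrossing configurations on `[a, b)` of arcs, weighted by `w`,
and `h` uncovered points, weighted by `o`. -/
noncomputable def openMatchingSeries (w : ℤ → ℤ → K) (o : ℤ → K) (h : ℕ) : IncidenceAlgebra K ℤ :=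
  matchingSeries w * (singlePoint o * matchingSeries w) ^ h

theorem openMatchingSeries_zero (w : ℤ → ℤ → K) (o : ℤ → K) :
    openMatchingSeries w o 0 = matchingSeries w := by
  rw [openMatchingSeries, pow_zero, mul_one]

theorem openMatchingSeries_succ (w : ℤ → ℤ → K) (o : ℤ → K) (h : ℕ) :
    openMatchingSeries w o (h + 1) =
      openMatchingSeries w o h * (singlePoint o * matchingSeries w) := by
  rw [openMatchingSeries, openMatchingSeries, pow_succ, mul_assoc]

theorem openMatchingSeries_succ' (w : ℤ → ℤ → K) (o : ℤ → K) (h : ℕ) :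
    openMatchingSeries w o (h + 1) =
      matchingSeries w * singlePoint o * openMatchingSeries w o h := by
  rw [openMatchingSeries, openMatchingSeries, pow_succ']
  simp only [mul_assoc]

theorem openMatchingSeries_succ_eq_mul_add (w : ℤ → ℤ → K) (o : ℤ → K) (h : ℕ) :
    openMatchingSeries w o (h + 1) = openMatchingSeries w o h * singlePoint o +
      openMatchingSeries w o (h + 1) * arcOver w (matchingSeries w) := by
  conv_lhs => rw [openMatchingSeries_succ, matchingSeries_eq_one_add_mul_arcOver]
  rw [openMatchingSeries_succ]
  noncomm_ring

theorem openMatchingSeries_succ_eq_add_mul (w : ℤ → ℤ → K) (o : ℤ → K) (h : ℕ) :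
    openMatchingSeries w o (h + 1) = singlePoint o * openMatchingSeries w o h +
      arcOver w (matchingSeries w) * openMatchingSeries w o (h + 1) := by
  conv_lhs => rw [openMatchingSeries_succ', matchingSeries_eq_one_add_arcOver_mul]
  rw [openMatchingSeries_succ']
  noncomm_ring

theorem openMatchingSeries_self (w : ℤ → ℤ → K) (o : ℤ → K) (h : ℕ) (a : ℤ) :
    openMatchingSeries w o h a a = if h = 0 then 1 else 0 := by
  cases h with
  | zero => simpa [openMatchingSeries_zero, matchingSum] using matchingSeries_add_two_mul w a 0
  | succ h =>
    rw [openMatchingSeries_succ_eq_add_mul, IncidenceAlgebra.add_apply, singlePoint_mul_apply,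
      IncidenceAlgebra.apply_eq_zero_of_not_le (by omega), IncidenceAlgebra.mul_apply, Icc_self,
      sum_singleton, arcOver_apply_of_le_add_one _ _ (by omega), mul_zero, zero_mul, add_zero,
      if_neg h.succ_ne_zero]

/-- The effect on the total weights `u h` of the configurations with `h` open arcs of reading one
more point, which either opens an arc, with weight `o`, or closes the innermost one, with weight
`c`. -/
def readPoint (o c : K) (u : ℕ → K) : ℕ → K
  | 0 => c * u 1
  | h + 1 => o * u h + c * u (h + 2)

theorem mul_arcOver_apply_add_one {o : ℤ → K} {c : K} {a b : ℤ}
    (hw : ∀ x ∈ Ico a b, w x b = o x * c) (f : IncidenceAlgebra K ℤ) :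
    (f * arcOver w (matchingSeries w)) a (b + 1) =
      c * (f * (singlePoint o * matchingSeries w)) a b := by
  rw [IncidenceAlgebra.mul_apply, IncidenceAlgebra.mul_apply, mul_sum]
  refine (sum_subset_zero_on_sdiff (Icc_subset_Icc_right (by omega))
    (fun x hx => ?_) fun x hx => ?_).symm
  · rw [arcOver_apply_of_le_add_one _ _ (by grind), mul_zero]
  · rw [singlePoint_mul_apply, arcOver_apply, add_sub_cancel_right]
    rcases (mem_Icc.mp hx).2.eq_or_lt with rfl | hxb
    · simp [IncidenceAlgebra.apply_eq_zero_of_not_le]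
    · rw [hw x (by grind)]
      ring

theorem arcOver_mul_apply {o : ℤ → K} {c : K} {a b : ℤ}
    (hw : ∀ x ∈ Ioo a b, w a x = o x * c) (f : IncidenceAlgebra K ℤ) :
    (arcOver w (matchingSeries w) * f) a b =
      c * (matchingSeries w * singlePoint o * f) (a + 1) b := by
  rw [IncidenceAlgebra.mul_apply, IncidenceAlgebra.mul_apply, mul_sum]
  refine (sum_subset_zero_on_sdiff (Icc_subset_Icc_left (by omega))
    (fun x hx => ?_) fun x hx => ?_).symm
  · rw [arcOver_apply_of_le_add_one _ _ (by grind), zero_mul]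
  · obtain ⟨y, rfl⟩ : ∃ y, x = y + 1 := ⟨x - 1, by omega⟩
    rw [mul_singlePoint_apply, arcOver_apply, add_sub_cancel_right]
    rcases (show a ≤ y by grind).eq_or_lt with rfl | hay
    · simp [IncidenceAlgebra.apply_eq_zero_of_not_le]
    · rw [hw y (by grind)]
      ring

theorem openMatchingSeries_apply_add_one {o : ℤ → K} {c : K} {a b : ℤ} (hab : a ≤ b)
    (hw : ∀ x ∈ Ico a b, w x b = o x * c) :
    (openMatchingSeries w o · a (b + 1)) = readPoint (o b) c (openMatchingSeries w o · a b) := by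
  funext h
  cases h with
  | zero =>
    rw [readPoint, openMatchingSeries_succ, openMatchingSeries_zero]
    conv_lhs => rw [matchingSeries_eq_one_add_mul_arcOver]
    rw [IncidenceAlgebra.add_apply, IncidenceAlgebra.one_apply, if_neg (by omega), zero_add,
      mul_arcOver_apply_add_one hw]
  | succ h =>
    rw [readPoint, openMatchingSeries_succ_eq_mul_add, IncidenceAlgebra.add_apply,
      mul_singlePoint_apply, mul_arcOver_apply_add_one hw,
      ← openMatchingSeries_succ, mul_comm (o b)]

theorem openMatchingSeries_apply_of_lt {o : ℤ → K} {c : K} {a b : ℤ} (hab : a < b)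
    (hw : ∀ x ∈ Ioo a b, w a x = o x * c) :
    (openMatchingSeries w o · a b) = readPoint (o a) c (openMatchingSeries w o · (a + 1) b) := by
  funext h
  cases h with
  | zero =>
    rw [readPoint, openMatchingSeries_succ', openMatchingSeries_zero]
    conv_lhs => rw [matchingSeries_eq_one_add_arcOver_mul]
    rw [IncidenceAlgebra.add_apply, IncidenceAlgebra.one_apply, if_neg (by omega), zero_add,
      arcOver_mul_apply hw]
  | succ h =>
    rw [readPoint, openMatchingSeries_succ_eq_add_mul, IncidenceAlgebra.add_apply,
      singlePoint_mul_apply, arcOver_mul_apply hw, ← openMatchingSeries_succ']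

end OpenMatchingSeries

section Unfolding

variable {K : Type*}

/-- The weight of an arc between `x < y` when the integers are read in the order
`0, 1, -1, 2, -2, …`: the endpoint read first opens the arc, with weight `o`, and the other one
closes it, with weight `c`. -/
def outwardWeight [Mul K] (o c : ℤ → K) (x y : ℤ) : K :=
  if x + y ≤ 0 then o y * c x else o x * c y

theorem openMatchingSeries_outwardWeight [CommRing K] {o c o' c' : ℤ → K}
    (ho : ∀ n : ℕ, o' (2 * n) = o (-n)) (ho' : ∀ n : ℕ, o' (2 * n + 1) = o (n + 1))
    (hc : ∀ n : ℕ, c' (2 * n) = c (-n)) (hc' : ∀ n : ℕ, c' (2 * n + 1) = c (n + 1)) (n : ℕ) :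
    (openMatchingSeries (outwardWeight o c) o · (1 - n) (n + 1)) =
      (openMatchingSeries (fun s t => o' s * c' t) o' · 0 (2 * n)) := by
  induction n with
  | zero =>
    funext h
    simp only [CharP.cast_eq_zero, sub_zero, zero_add, mul_zero, openMatchingSeries_self]
  | succ n ih =>
    have hl : (1 : ℤ) - (n + 1 : ℕ) = -n := by push_cast; ring
    have hr : (2 : ℤ) * (n + 1 : ℕ) = 2 * n + 1 + 1 := by push_cast; ring
    rw [hl, hr, Nat.cast_succ, openMatchingSeries_apply_add_one (c := c (n + 1)) (by omega),
      openMatchingSeries_apply_of_lt (c := c (-n)) (by omega), neg_add_eq_sub, ih,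
      openMatchingSeries_apply_add_one (c := c' (2 * n + 1)) (by omega) fun _ _ => rfl,
      openMatchingSeries_apply_add_one (c := c' (2 * n)) (by omega) fun _ _ => rfl,
      ho, ho', hc, hc']
    · intro x hx
      rw [mem_Ioo] at hx
      rw [outwardWeight, if_pos (by omega)]
    · intro x hx
      rw [mem_Ico] at hx
      rw [outwardWeight, if_neg (by omega)]

theorem matchingSum_outwardWeight [CommRing K] {o c o' c' : ℤ → K}
    (ho : ∀ n : ℕ, o' (2 * n) = o (-n)) (ho' : ∀ n : ℕ, o' (2 * n + 1) = o (n + 1))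
    (hc : ∀ n : ℕ, c' (2 * n) = c (-n)) (hc' : ∀ n : ℕ, c' (2 * n + 1) = c (n + 1)) (n : ℕ) :
    matchingSum (outwardWeight o c) (1 - n) n = matchingSum (fun s t => o' s * c' t) 0 n := by
  have h := congrFun (openMatchingSeries_outwardWeight ho ho' hc hc' n) 0
  simp only [openMatchingSeries_zero] at h
  rwa [show (n + 1 : ℤ) = 1 - n + 2 * n by ring, matchingSeries_add_two_mul,
    ← zero_add (2 * (n : ℤ)), matchingSeries_add_two_mul] at h

end Unfolding

theorem catalan_recursion_of_pair {K : Type*} [CommSemiring K] {q p : K} {c d : ℕ → K}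
    (hd : d 0 = 1)
    (hc : ∀ n, c (n + 1) = ∑ x ∈ antidiagonal n, d x.1 * c x.2)
    (hd' : ∀ n, d (n + 1) = q * ∑ x ∈ antidiagonal n, p ^ x.1 * c x.1 * d x.2) (n : ℕ) :
    c (n + 2) = c (n + 1) + q * ∑ x ∈ antidiagonal n, p ^ x.1 * c x.1 * c (x.2 + 1) := by
  open PowerSeries in
  have hC : mk (fun n => c (n + 1)) = mk d * mk c := by
    ext n
    simp only [coeff_mul, coeff_mk, hc]
  have hD : mk (fun n => d (n + 1)) = C q * (mk (fun n => p ^ n * c n) * mk d) := by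
    ext n
    rw [coeff_C_mul]
    simp only [coeff_mul, coeff_mk, hd']
  rw [hc, Nat.sum_antidiagonal_succ, hd, one_mul]
  congr 1
  calc ∑ x ∈ antidiagonal n, d (x.1 + 1) * c x.2
      = coeff n (mk (fun n => d (n + 1)) * mk c) := by simp only [coeff_mul, coeff_mk]
    _ = coeff n (C q * (mk (fun n => p ^ n * c n) * mk fun n => c (n + 1))) := by
      rw [hD, hC, mul_assoc, mul_assoc]
    _ = q * ∑ x ∈ antidiagonal n, p ^ x.1 * c x.1 * c (x.2 + 1) := by
      rw [coeff_C_mul]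
      simp only [coeff_mul, coeff_mk]

section Weights

variable {K : Type*} [Field K] {q r : K}

/-- The factor of an opening point `x` in the weight of an arc, where `r ^ 2 = p`. -/
def openingFactor (r : K) (x : ℤ) : K := r ^ (-(x.natAbs : ℤ))

/-- The factor of a closing point `x` in the weight of an arc, where `r ^ 2 = p`: the arcs closed
at a point `x ≤ 0` are those that stand for excedances. -/
def closingFactor (q r : K) (x : ℤ) : K := (if x ≤ 0 then q else 1) * r ^ ((x.natAbs : ℤ) - 1)

/-- The weight of an arc between `s < t` after the points `0, 1, -1, 2, -2, …` have been moved to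
`0, 1, 2, 3, 4, …`: the product of the opening factor of the former position of `s` and of the
closing factor of that of `t`, extended to all integers so as to be invariant under translation
by `2`. -/
def unfoldedWeight (q r : K) (s t : ℤ) : K :=
  r ^ (-((s + 1) / 2)) * if Even t then q * r ^ (t / 2 - 1) else r ^ (t / 2)

theorem outwardWeight_factors_apply (hr : r ≠ 0) (e : ℤ) (k : ℕ) :
    outwardWeight (openingFactor r) (closingFactor q r) (-e - k) (-e + k + 1) =
      (if 0 < e then q else 1) * (r ^ 2) ^ (min k (e - 1).toNat + min k (-e).toNat) := by
  have hpow : ∀ (x : K) (i j : ℤ) (l : ℕ), i + j = 2 * l →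
      r ^ i * (x * r ^ j) = x * (r ^ 2) ^ l := by
    intro x i j l h
    rw [mul_left_comm, ← zpow_add₀ hr, h, zpow_mul, zpow_ofNat, zpow_natCast]
  rcases lt_or_ge 0 e with he | he
  · rw [outwardWeight, if_pos (by omega), openingFactor, closingFactor, if_pos (by omega),
      if_pos he]
    exact hpow _ _ _ _ (by omega)
  · rw [outwardWeight, if_neg (by omega), openingFactor, closingFactor, if_neg (by omega),
      if_neg (by omega)]
    exact hpow _ _ _ _ (by omega)

theorem matchingSum_outwardWeight_factors (n : ℕ) :
    matchingSum (outwardWeight (openingFactor r) (closingFactor q r)) (1 - n) n =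
      matchingSum (unfoldedWeight q r) 0 n := by
  refine matchingSum_outwardWeight (o' := fun s => r ^ (-((s + 1) / 2)))
    (c' := fun t => if Even t then q * r ^ (t / 2 - 1) else r ^ (t / 2))
    (fun m => ?_) (fun m => ?_) (fun m => ?_) (fun m => ?_) n
  · rw [openingFactor]
    congr 1
    omega
  · rw [openingFactor]
    congr 1
    omega
  · rw [closingFactor, if_pos (by simp), if_pos (by omega)]
    congr 2
    omega
  · rw [closingFactor, if_neg (by simp), if_neg (by omega), one_mul]
    congr 1
    omega

theorem unfoldedWeight_add_two (hr : r ≠ 0) (s t : ℤ) :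
    unfoldedWeight q r (s + 2) (t + 2) = unfoldedWeight q r s t := by
  have hs : -((s + 2 + 1) / 2) = -((s + 1) / 2) - 1 := by omega
  have ht : (t + 2) / 2 = t / 2 + 1 := by omega
  simp only [unfoldedWeight, Int.even_add, even_two, iff_true, hs, ht, zpow_sub_one₀ hr,
    zpow_add_one₀ hr]
  split_ifs <;> field_simp

theorem matchingSum_unfoldedWeight_zero_succ (hr : r ≠ 0) (n : ℕ) :
    matchingSum (unfoldedWeight q r) 0 (n + 1) = ∑ x ∈ antidiagonal n,
      r ^ x.1 * matchingSum (unfoldedWeight q r) 1 x.1 *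
        matchingSum (unfoldedWeight q r) 0 x.2 := by
  rw [matchingSum_succ_of_periodic (unfoldedWeight_add_two hr)]
  refine sum_congr rfl fun x _ => ?_
  have hdiv : (2 * (x.1 : ℤ) + 1) / 2 = x.1 := by omega
  have hw : unfoldedWeight q r 0 (2 * x.1 + 1) = r ^ x.1 := by
    simp [unfoldedWeight, hdiv]
  rw [zero_add, zero_add, hw, mul_assoc]

theorem matchingSum_unfoldedWeight_one_succ (hr : r ≠ 0) (n : ℕ) :
    r ^ (n + 1) * matchingSum (unfoldedWeight q r) 1 (n + 1) = q * ∑ x ∈ antidiagonal n,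
      (r ^ 2) ^ x.1 * matchingSum (unfoldedWeight q r) 0 x.1 *
        (r ^ x.2 * matchingSum (unfoldedWeight q r) 1 x.2) := by
  rw [matchingSum_succ_of_periodic (unfoldedWeight_add_two hr), mul_sum, mul_sum]
  refine sum_congr rfl fun x hx => ?_
  obtain rfl : x.1 + x.2 = n := HasAntidiagonal.mem_antidiagonal.mp hx
  have hw : unfoldedWeight q r 1 (1 + 2 * x.1 + 1) = q * r⁻¹ * r ^ x.1 := by
    rw [unfoldedWeight, if_pos ⟨x.1 + 1, by ring⟩,
      show (1 + 2 * (x.1 : ℤ) + 1) / 2 - 1 = x.1 by omega, zpow_natCast]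
    rw [show (-((1 + 1) / 2) : ℤ) = -1 by rfl, zpow_neg_one]
    ring
  have hshift : matchingSum (unfoldedWeight q r) (1 + 1) x.1 =
      matchingSum (unfoldedWeight q r) 0 x.1 :=
    matchingSum_add_eq_of_forall (unfoldedWeight_add_two hr) 0 x.1
  rw [hw, hshift]
  field_simp
  ring

theorem matchingSum_unfoldedWeight_add_two (hr : r ≠ 0) (n : ℕ) :
    matchingSum (unfoldedWeight q r) 0 (n + 2) = matchingSum (unfoldedWeight q r) 0 (n + 1) +
      q * ∑ x ∈ antidiagonal n, (r ^ 2) ^ x.1 * matchingSum (unfoldedWeight q r) 0 x.1 *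
        matchingSum (unfoldedWeight q r) 0 (x.2 + 1) :=
  catalan_recursion_of_pair (d := fun n => r ^ n * matchingSum (unfoldedWeight q r) 1 n)
    (by simp [matchingSum]) (matchingSum_unfoldedWeight_zero_succ hr)
    (matchingSum_unfoldedWeight_one_succ hr) n

end Weights

section PointStatistics

variable {ι κ : Type*} [Fintype ι] [Fintype κ]

/-- The number of points `(x i, y i)` strictly above the diagonal. -/
def excPoints (x y : ι → ℤ) : ℕ := ∑ i, if x i < y i then 1 else 0

/-- Whether the points `(x₁, y₁)` and `(x₂, y₂)`, in this order, form a crossing. An entry of a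
permutation `σ` is encoded as the point `(i, σ i)`. -/
abbrev IsCrossing (x₁ y₁ x₂ y₂ : ℤ) : Prop :=
  (x₁ < x₂ ∧ x₂ < y₁ ∧ y₁ < y₂) ∨ (y₁ < y₂ ∧ y₂ ≤ x₁ ∧ x₁ < x₂)

/-- The number of crossings of the point configuration `(x i, y i)`. -/
def crsPoints (x y : ι → ℤ) : ℕ := ∑ i, ∑ j, if IsCrossing (x i) (y i) (x j) (y j) then 1 else 0

theorem excPoints_comp_equiv (e : κ ≃ ι) (x y : ι → ℤ) :
    excPoints (x ∘ e) (y ∘ e) = excPoints x y :=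
  e.sum_comp fun i => if x i < y i then 1 else 0

theorem crsPoints_comp_equiv (e : κ ≃ ι) (x y : ι → ℤ) :
    crsPoints (x ∘ e) (y ∘ e) = crsPoints x y := by
  unfold crsPoints
  rw [← e.sum_comp]
  exact sum_congr rfl fun i _ =>
    e.sum_comp fun j => if IsCrossing (x (e i)) (y (e i)) (x j) (y j) then 1 else 0

theorem excPoints_eq_of_eq_add {x y x' y' : ι → ℤ} (c : ℤ) (hx : ∀ i, x' i = x i + c)
    (hy : ∀ i, y' i = y i + c) : excPoints x' y' = excPoints x y := by
  simp only [excPoints, hx, hy, add_lt_add_iff_right]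

theorem crsPoints_eq_of_eq_add {x y x' y' : ι → ℤ} (c : ℤ) (hx : ∀ i, x' i = x i + c)
    (hy : ∀ i, y' i = y i + c) : crsPoints x' y' = crsPoints x y := by
  simp only [crsPoints, IsCrossing, hx, hy, add_lt_add_iff_right, add_le_add_iff_right]

theorem excPoints_sum (x y : ι ⊕ (Unit ⊕ κ) → ℤ) :
    excPoints x y = excPoints (x ∘ Sum.inl) (y ∘ Sum.inl) +
      (if x (.inr (.inl ())) < y (.inr (.inl ())) then 1 else 0) +
      excPoints (x ∘ Sum.inr ∘ Sum.inr) (y ∘ Sum.inr ∘ Sum.inr) := by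
  simp only [excPoints, Fintype.sum_sum_type, univ_unique, sum_singleton,
    PUnit.default_eq_unit, Function.comp_apply, add_assoc]

theorem crsPoints_sum (x y : ι ⊕ (Unit ⊕ κ) → ℤ)
    (hx₁ : ∀ i, x (.inl i) < x (.inr (.inl ())))
    (hx₂ : ∀ j, x (.inr (.inl ())) < x (.inr (.inr j)))
    (hy₁ : ∀ i, y (.inl i) < y (.inr (.inl ())))
    (hy₂ : ∀ j, y (.inr (.inr j)) < y (.inr (.inl ())))
    (hy₃ : ∀ i j, y (.inr (.inr j)) < y (.inl i)) :
    crsPoints x y = crsPoints (x ∘ Sum.inl) (y ∘ Sum.inl) +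
      ∑ i, (if x (.inr (.inl ())) < y (.inl i) ∨ y (.inr (.inl ())) ≤ x (.inl i) then 1 else 0) +
      crsPoints (x ∘ Sum.inr ∘ Sum.inr) (y ∘ Sum.inr ∘ Sum.inr) := by
  have h₁ : ∀ i, IsCrossing (x (.inl i)) (y (.inl i)) (x (.inr (.inl ()))) (y (.inr (.inl ()))) ↔
      x (.inr (.inl ())) < y (.inl i) ∨ y (.inr (.inl ())) ≤ x (.inl i) := fun i => by
    have := hx₁ i; have := hy₁ i; unfold IsCrossing; omega
  have h₂ : ∀ i, ¬IsCrossing (x (.inr (.inl ()))) (y (.inr (.inl ()))) (x (.inl i)) (y (.inl i)) :=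
    fun i => by have := hx₁ i; unfold IsCrossing; omega
  have h₃ : ∀ j, ¬IsCrossing (x (.inr (.inl ()))) (y (.inr (.inl ())))
      (x (.inr (.inr j))) (y (.inr (.inr j))) :=
    fun j => by have := hy₂ j; unfold IsCrossing; omega
  have h₄ : ∀ j, ¬IsCrossing (x (.inr (.inr j))) (y (.inr (.inr j)))
      (x (.inr (.inl ()))) (y (.inr (.inl ()))) :=
    fun j => by have := hx₂ j; unfold IsCrossing; omega
  have h₅ : ∀ i j, ¬IsCrossing (x (.inl i)) (y (.inl i)) (x (.inr (.inr j))) (y (.inr (.inr j))) :=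
    fun i j => by have := hy₃ i j; unfold IsCrossing; omega
  have h₆ : ∀ i j, ¬IsCrossing (x (.inr (.inr j))) (y (.inr (.inr j))) (x (.inl i)) (y (.inl i)) :=
    fun i j => by have := hx₁ i; have := hx₂ j; unfold IsCrossing; omega
  have h₇ : ∀ a b, ¬IsCrossing a b a b := fun a b => by unfold IsCrossing; omega
  simp only [crsPoints, Fintype.sum_sum_type, univ_unique, sum_singleton, h₁,
    PUnit.default_eq_unit, h₂, h₃, h₄, h₅, h₆, h₇, if_false, sum_const_zero, add_zero,
    zero_add, sum_add_distrib, Function.comp_apply, add_assoc]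

end PointStatistics

section Glue

/-- Positions of a left block, a central entry and a right block. -/
noncomputable def blockPosition (k m : ℕ) : Fin k ⊕ (Unit ⊕ Fin m) ≃ Fin (k + m + 1) :=
  Equiv.ofBijective
    (Sum.elim (fun i => ⟨i, by omega⟩)
      (Sum.elim (fun _ => ⟨k, by omega⟩) fun j => ⟨k + 1 + j, by omega⟩)) <| by
    rw [Fintype.bijective_iff_injective_and_card]
    refine ⟨?_, by simp only [Fintype.card_sum, Fintype.card_fin, Fintype.card_unit]; omega⟩
    rintro (i | ⟨⟩ | i) (j | ⟨⟩ | j) h <;>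
      simp only [Sum.elim_inl, Sum.elim_inr, reduceCtorEq, Sum.inl.injEq,
        Sum.inr.injEq, Fin.ext_iff] at h ⊢ <;> omega

/-- Values of a left block, a maximal central entry and a right block lying below the left one. -/
noncomputable def blockValue (k m : ℕ) : Fin k ⊕ (Unit ⊕ Fin m) ≃ Fin (k + m + 1) :=
  Equiv.ofBijective
    (Sum.elim (fun i => ⟨m + i, by omega⟩)
      (Sum.elim (fun _ => ⟨k + m, by omega⟩) fun j => ⟨j, by omega⟩)) <| by
    rw [Fintype.bijective_iff_injective_and_card]
    refine ⟨?_, by simp only [Fintype.card_sum, Fintype.card_fin, Fintype.card_unit]; omega⟩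
    rintro (i | ⟨⟩ | i) (j | ⟨⟩ | j) h <;>
      simp only [Sum.elim_inl, Sum.elim_inr, reduceCtorEq, Sum.inl.injEq,
        Sum.inr.injEq, Fin.ext_iff] at h ⊢ <;> omega

variable {k m : ℕ}

@[simp] theorem blockPosition_inl (i : Fin k) : (blockPosition k m (.inl i) : ℕ) = i := rfl

@[simp] theorem blockPosition_inr_inl (u : Unit) :
    (blockPosition k m (.inr (.inl u)) : ℕ) = k := rfl

@[simp] theorem blockPosition_inr_inr (j : Fin m) :
    (blockPosition k m (.inr (.inr j)) : ℕ) = k + 1 + j := rfl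

@[simp] theorem blockValue_inl (i : Fin k) : (blockValue k m (.inl i) : ℕ) = m + i := rfl

@[simp] theorem blockValue_inr_inl (u : Unit) :
    (blockValue k m (.inr (.inl u)) : ℕ) = k + m := rfl

@[simp] theorem blockValue_inr_inr (j : Fin m) :
    (blockValue k m (.inr (.inr j)) : ℕ) = j := rfl

/-- The permutation whose maximal entry is preceded by a copy of `α` and followed by a copy of `β`,
with all entries of `α` above all entries of `β`. -/
noncomputable def glue (α : Perm (Fin k)) (β : Perm (Fin m)) : Perm (Fin (k + m + 1)) :=
  (blockPosition k m).symm.trans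
    ((Equiv.sumCongr α (Equiv.sumCongr (Equiv.refl Unit) β)).trans (blockValue k m))

theorem glue_blockPosition (α : Perm (Fin k)) (β : Perm (Fin m)) (s : Fin k ⊕ (Unit ⊕ Fin m)) :
    glue α β (blockPosition k m s) =
      blockValue k m (Sum.map α (Sum.map id β) s) := by
  rw [glue, Equiv.trans_apply, symm_apply_apply]
  rfl

theorem glue_blockPosition_inl (α : Perm (Fin k)) (β : Perm (Fin m)) (i : Fin k) :
    (glue α β (blockPosition k m (.inl i)) : ℕ) = m + α i := by
  rw [glue_blockPosition, Sum.map_inl, blockValue_inl]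

theorem glue_blockPosition_inr_inl (α : Perm (Fin k)) (β : Perm (Fin m)) (u : Unit) :
    (glue α β (blockPosition k m (.inr (.inl u))) : ℕ) = k + m := by
  rw [glue_blockPosition, Sum.map_inr, Sum.map_inl, blockValue_inr_inl]

theorem glue_blockPosition_inr_inr (α : Perm (Fin k)) (β : Perm (Fin m)) (j : Fin m) :
    (glue α β (blockPosition k m (.inr (.inr j))) : ℕ) = β j := by
  rw [glue_blockPosition, Sum.map_inr, Sum.map_inr, blockValue_inr_inr]

theorem contains_iff_strictMono_comp {n l : ℕ} {σ : Perm (Fin n)} {τ : Perm (Fin l)} :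
    Contains σ τ ↔ ∃ f : Fin l → Fin n, StrictMono f ∧ StrictMono (σ ∘ f ∘ τ.symm) := by
  refine exists_congr fun f => and_congr_right fun _ => ⟨fun h a b hab => ?_, fun h a b => ?_⟩
  · simpa only [Function.comp_apply, h, apply_symm_apply] using hab
  · simpa only [Function.comp_apply, symm_apply_apply] using h.lt_iff_lt (a := τ a) (b := τ b)

theorem strictMono_vecCons_three {α : Type*} [Preorder α] {i j l : α} (hij : i < j)
    (hjl : j < l) : StrictMono ![i, j, l] := by
  rw [Fin.strictMono_iff_lt_succ]
  intro a
  fin_cases a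
  exacts [hij, hjl]

theorem avoids_p132_iff {n : ℕ} {σ : Perm (Fin n)} :
    Avoids σ p132 ↔ ∀ i j l, i < j → j < l → ¬(σ i < σ l ∧ σ l < σ j) := by
  constructor
  · intro h i j l hij hjl hσ
    have hcomp : σ ∘ ![i, j, l] ∘ p132.symm = ![σ i, σ l, σ j] := by
      funext a
      fin_cases a <;> rfl
    exact h <| contains_iff_strictMono_comp.mpr ⟨_, strictMono_vecCons_three hij hjl,
      hcomp ▸ strictMono_vecCons_three hσ.1 hσ.2⟩
  · rintro h ⟨f, hf, hσ⟩
    exact h (f 0) (f 1) (f 2) (hf (by decide)) (hf (by decide))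
      ⟨(hσ 0 2).mpr (by decide), (hσ 2 1).mpr (by decide)⟩

theorem Avoids.of_glue_left {α : Perm (Fin k)} {β : Perm (Fin m)} (h : Avoids (glue α β) p132) :
    Avoids α p132 := by
  rw [avoids_p132_iff] at h ⊢
  intro i j l hij hjl hσ
  refine h (blockPosition k m (.inl i)) (blockPosition k m (.inl j))
    (blockPosition k m (.inl l)) ?_ ?_ ?_ <;>
  simp only [glue_blockPosition, Sum.map_inl, Fin.lt_def, blockPosition_inl,
    blockValue_inl] at * <;> omega

theorem Avoids.of_glue_right {α : Perm (Fin k)} {β : Perm (Fin m)} (h : Avoids (glue α β) p132) :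
    Avoids β p132 := by
  rw [avoids_p132_iff] at h ⊢
  intro i j l hij hjl hσ
  refine h (blockPosition k m (.inr (.inr i))) (blockPosition k m (.inr (.inr j)))
    (blockPosition k m (.inr (.inr l))) ?_ ?_ ?_ <;>
  simp only [glue_blockPosition, Sum.map_inr, Fin.lt_def, blockPosition_inr_inr,
    blockValue_inr_inr] at * <;> omega

theorem Avoids.glue {α : Perm (Fin k)} {β : Perm (Fin m)} (hα : Avoids α p132)
    (hβ : Avoids β p132) : Avoids (glue α β) p132 := by
  rw [avoids_p132_iff] at hα hβ ⊢
  intro i j l hij hjl hσ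
  obtain ⟨i, rfl⟩ := (blockPosition k m).surjective i
  obtain ⟨j, rfl⟩ := (blockPosition k m).surjective j
  obtain ⟨l, rfl⟩ := (blockPosition k m).surjective l
  simp only [glue_blockPosition] at hσ
  rcases i with i | ⟨⟩ | i <;> rcases j with j | ⟨⟩ | j <;> rcases l with l | ⟨⟩ | l <;>
    simp only [Sum.map_inl, Sum.map_inr, Fin.lt_def, blockPosition_inl, blockPosition_inr_inl,
      blockPosition_inr_inr, blockValue_inl, blockValue_inr_inl, blockValue_inr_inr] at hij hjl hσ
  case inl.inl.inl => exact hα i j l hij hjl (by simp only [Fin.lt_def]; omega)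
  case inr.inr.inr.inr.inr.inr =>
    exact hβ i j l (by simp only [Fin.lt_def]; omega) (by simp only [Fin.lt_def]; omega) hσ
  all_goals omega

theorem avoids_glue_iff {α : Perm (Fin k)} {β : Perm (Fin m)} :
    Avoids (glue α β) p132 ↔ Avoids α p132 ∧ Avoids β p132 :=
  ⟨fun h => ⟨h.of_glue_left, h.of_glue_right⟩, fun h => h.1.glue h.2⟩

theorem glue_injective {α α' : Perm (Fin k)} {β β' : Perm (Fin m)} (h : glue α β = glue α' β') :
    α = α' ∧ β = β' := by
  have h' : ∀ s, Sum.map α (Sum.map id β) s = Sum.map α' (Sum.map id β') s := fun s => by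
    rw [← (blockValue k m).apply_eq_iff_eq, ← glue_blockPosition, ← glue_blockPosition, h]
  exact ⟨Equiv.ext fun i => by simpa using h' (.inl i),
    Equiv.ext fun j => by simpa using h' (.inr (.inr j))⟩

theorem glue_apply_center (α : Perm (Fin k)) (β : Perm (Fin m)) :
    glue α β ⟨k, by omega⟩ = Fin.last (k + m) :=
  (glue_blockPosition α β (.inr (.inl ()))).trans (Fin.ext rfl)

theorem apply_lt_apply_of_avoids_p132 {n : ℕ} {σ : Perm (Fin (n + 1))} (hσ : Avoids σ p132)
    {i c l : Fin (n + 1)} (hc : σ c = Fin.last n) (hi : i < c) (hl : c < l) : σ l < σ i := by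
  have hlc : σ l < σ c := by
    rw [hc, Fin.lt_last_iff_ne_last, ← hc]
    exact σ.injective.ne hl.ne'
  exact lt_of_le_of_ne (not_lt.mp fun h => avoids_p132_iff.mp hσ i c l hi hl ⟨h, hlc⟩)
    (σ.injective.ne (hi.trans hl).ne')

theorem sub_le_apply_of_avoids_p132 {n : ℕ} {σ : Perm (Fin (n + 1))} (hσ : Avoids σ p132)
    {i c : Fin (n + 1)} (hc : σ c = Fin.last n) (hi : i < c) : n - (c : ℕ) ≤ σ i := by
  have h : #(Ioi c) ≤ #(Iio (σ i)) :=
    card_le_card_of_injOn σ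
      (fun l hl => by
        simpa using apply_lt_apply_of_avoids_p132 hσ hc hi (mem_Ioi.mp hl))
      σ.injective.injOn
  rw [Fin.card_Ioi, Fin.card_Iio] at h
  omega

theorem exists_glue_eq {σ : Perm (Fin (k + m + 1))} (hσ : Avoids σ p132)
    (hk : σ ⟨k, by omega⟩ = Fin.last (k + m)) :
    ∃ (α : Perm (Fin k)) (β : Perm (Fin m)), glue α β = σ := by
  let e : Perm (Fin k ⊕ (Unit ⊕ Fin m)) :=
    (blockPosition k m).trans (σ.trans (blockValue k m).symm)
  have he : ∀ s, σ (blockPosition k m s) = blockValue k m (e s) := fun s => by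
    simp only [e, Equiv.trans_apply, apply_symm_apply]
  have he_inl : Set.MapsTo e (Set.range Sum.inl) (Set.range Sum.inl) := by
    rintro _ ⟨i, rfl⟩
    have hlow := sub_le_apply_of_avoids_p132 hσ hk (i := blockPosition k m (.inl i)) i.2
    have hne : σ (blockPosition k m (.inl i)) ≠ Fin.last (k + m) := by
      rw [← hk]
      exact σ.injective.ne (Fin.ne_of_lt i.2)
    rcases hs : e (.inl i) with j | ⟨⟩ | j <;> rw [he, hs] at hlow hne
    · exact ⟨j, rfl⟩
    · exact absurd (Fin.ext rfl) hne
    · rw [blockValue_inr_inr, Nat.add_sub_cancel_left] at hlow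
      exact absurd hlow (by omega)
  have he_center : e (.inr (.inl ())) = .inr (.inl ()) := by
    rw [← (blockValue k m).apply_eq_iff_eq, ← he]
    exact hk.trans (Fin.ext rfl)
  obtain ⟨⟨α, ρ⟩, hαρ⟩ := Equiv.Perm.mem_sumCongrHom_range_of_perm_mapsTo_inl he_inl
  have hρ : Set.MapsTo ρ (Set.range Sum.inl) (Set.range Sum.inl) := by
    rintro _ ⟨⟨⟩, rfl⟩
    rw [← hαρ] at he_center
    exact ⟨(), (Sum.inr_injective he_center).symm⟩
  obtain ⟨⟨u, β⟩, rfl⟩ := Equiv.Perm.mem_sumCongrHom_range_of_perm_mapsTo_inl hρ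
  refine ⟨α, β, Equiv.ext fun t => ?_⟩
  obtain ⟨s, rfl⟩ := (blockPosition k m).surjective t
  rw [glue_blockPosition, he, ← hαρ]
  rcases s with i | ⟨⟩ | j <;> rfl

end Glue

section ShiftedStatistics

/-- The number of excedances of `σ` after shifting its values by `d`. -/
def shiftedExc {n : ℕ} (d : ℤ) (σ : Perm (Fin n)) : ℕ :=
  excPoints (fun i : Fin n => (i : ℤ)) fun i => (σ i : ℤ) + d

/-- The number of crossings of `σ` after shifting its values by `d`. -/
def shiftedCrs {n : ℕ} (d : ℤ) (σ : Perm (Fin n)) : ℕ :=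
  crsPoints (fun i : Fin n => (i : ℤ)) fun i => (σ i : ℤ) + d

theorem shiftedExc_zero {n : ℕ} (σ : Perm (Fin n)) : shiftedExc 0 σ = exc σ := by
  simp [shiftedExc, excPoints, exc]

theorem shiftedCrs_zero {n : ℕ} (σ : Perm (Fin n)) : shiftedCrs 0 σ = crs σ := by
  simp only [shiftedCrs, crsPoints, crs, card_filter, Fintype.sum_prod_type, IsCrossing,
    add_zero, Nat.cast_lt, Nat.cast_le]

theorem sum_fin_ite_le (k : ℕ) (a : ℤ) :
    (∑ i : Fin k, if a ≤ (i : ℤ) then 1 else 0) = min k (k - a).toNat := by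
  induction k with
  | zero => simp
  | succ k ih =>
    simp only [Fin.sum_univ_castSucc, Fin.val_castSucc, ih, Fin.val_last]
    split_ifs <;> omega

variable {k m : ℕ}

/-- The left-hand side counts the entries of the left block that cross the maximum, when all values
of `glue α β` have been shifted so that those of the left block start at `e`. -/
theorem sum_cross_center (α : Perm (Fin k)) (e : ℤ) :
    (∑ i : Fin k, if (k : ℤ) < α i + e ∨ (k : ℤ) + e ≤ i then 1 else 0) =
      min k (e - 1).toNat + min k (-e).toNat := by
  rcases lt_or_ge 0 e with he | he
  · calc (∑ i : Fin k, if (k : ℤ) < α i + e ∨ (k : ℤ) + e ≤ i then 1 else 0)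
        = ∑ i : Fin k, if (k : ℤ) - e + 1 ≤ α i then 1 else 0 :=
          sum_congr rfl fun i _ => if_congr (by omega) rfl rfl
      _ = ∑ i : Fin k, if (k : ℤ) - e + 1 ≤ i then 1 else 0 :=
          Equiv.sum_comp α fun i => if (k : ℤ) - e + 1 ≤ i then 1 else 0
      _ = min k (e - 1).toNat + min k (-e).toNat := by
          rw [sum_fin_ite_le]
          omega
  · calc (∑ i : Fin k, if (k : ℤ) < α i + e ∨ (k : ℤ) + e ≤ i then 1 else 0)
        = ∑ i : Fin k, if (k : ℤ) + e ≤ i then 1 else 0 :=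
          sum_congr rfl fun i _ => if_congr (by omega) rfl rfl
      _ = min k (e - 1).toNat + min k (-e).toNat := by
          rw [sum_fin_ite_le]
          omega

theorem shiftedExc_glue (d : ℤ) (α : Perm (Fin k)) (β : Perm (Fin m)) :
    shiftedExc d (glue α β) = shiftedExc (d + m) α + (if 0 < d + m then 1 else 0) +
      shiftedExc (d - k - 1) β := by
  rw [shiftedExc, ← excPoints_comp_equiv (blockPosition k m), excPoints_sum]
  simp only [Function.comp_def, glue_blockPosition_inl, glue_blockPosition_inr_inl,
    glue_blockPosition_inr_inr, blockPosition_inl, blockPosition_inr_inl, blockPosition_inr_inr]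
  congr 1
  · congr 1
    · exact congrArg₂ excPoints rfl (funext fun i => by push_cast; ring)
    · exact if_congr (by omega) rfl rfl
  · exact excPoints_eq_of_eq_add (k + 1) (fun j => by push_cast; ring) fun j => by ring

theorem shiftedCrs_glue (d : ℤ) (α : Perm (Fin k)) (β : Perm (Fin m)) :
    shiftedCrs d (glue α β) = shiftedCrs (d + m) α +
      (min k (d + m - 1).toNat + min k (-(d + m)).toNat) + shiftedCrs (d - k - 1) β := by
  rw [shiftedCrs, ← crsPoints_comp_equiv (blockPosition k m), crsPoints_sum]
  all_goals simp only [Function.comp_def, glue_blockPosition_inl, glue_blockPosition_inr_inl,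
    glue_blockPosition_inr_inr, blockPosition_inl, blockPosition_inr_inl, blockPosition_inr_inr]
  · rw [← sum_cross_center α]
    congr 1
    · congr 1
      · exact congrArg₂ crsPoints rfl (funext fun i => by push_cast; ring)
      · exact sum_congr rfl fun i _ => if_congr (by omega) rfl rfl
    · exact crsPoints_eq_of_eq_add (k + 1) (fun j => by push_cast; ring) fun j => by ring
  all_goals
    intros
    omega

open scoped Classical in
/-- The generating function of 132-avoiding permutations by shifted excedances and crossings. -/
noncomputable def shiftedGenFun {K : Type*} [CommSemiring K] (q p : K) (n : ℕ) (d : ℤ) : K :=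
  ∑ σ : Perm (Fin n) with Avoids σ p132, q ^ shiftedExc d σ * p ^ shiftedCrs d σ

theorem shiftedGenFun_zero {K : Type*} [CommSemiring K] (q p : K) (d : ℤ) :
    shiftedGenFun q p 0 d = 1 := by
  simp [shiftedGenFun, avoids_p132_iff, shiftedExc, shiftedCrs, excPoints, crsPoints]

open scoped Classical in
theorem sum_avoids_p132_eq_sum_glue {K : Type*} [AddCommMonoid K]
    (f : Perm (Fin (k + m + 1)) → K) :
    ∑ σ with Avoids σ p132 ∧ σ ⟨k, by omega⟩ = Fin.last (k + m), f σ =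
      ∑ α : Perm (Fin k) with Avoids α p132, ∑ β : Perm (Fin m) with Avoids β p132,
        f (glue α β) := by
  rw [← sum_product']
  symm
  refine sum_bij (fun x _ => glue x.1 x.2) ?_ ?_ ?_ fun _ _ => rfl
  · rintro ⟨α, β⟩ h
    simpa [avoids_glue_iff, glue_apply_center] using h
  · rintro ⟨α, β⟩ _ ⟨α', β'⟩ _ h
    exact Prod.ext_iff.mpr (glue_injective h)
  · intro σ h
    obtain ⟨hσ, hk⟩ := (mem_filter.mp h).2
    obtain ⟨α, β, rfl⟩ := exists_glue_eq hσ hk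
    exact ⟨(α, β), by simpa [avoids_glue_iff] using hσ, rfl⟩

theorem shiftedGenFun_succ {K : Type*} [CommSemiring K] (q p : K) (n : ℕ) (d : ℤ) :
    shiftedGenFun q p (n + 1) d = ∑ x ∈ antidiagonal n, (if 0 < d + x.2 then q else 1) *
      p ^ (min x.1 (d + x.2 - 1).toNat + min x.1 (-(d + x.2)).toNat) *
        (shiftedGenFun q p x.1 (d + x.2) * shiftedGenFun q p x.2 (d - x.1 - 1)) := by
  classical
  rw [shiftedGenFun, ← sum_fiberwise_of_maps_to (t := antidiagonal n)
    (g := fun σ => ((σ.symm (Fin.last n) : ℕ), n - (σ.symm (Fin.last n) : ℕ)))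
    fun σ _ => HasAntidiagonal.mem_antidiagonal.mpr (by simp only; omega)]
  refine sum_congr rfl fun ⟨k, m⟩ hx => ?_
  obtain rfl : k + m = n := HasAntidiagonal.mem_antidiagonal.mp hx
  have hfiber : ∀ σ : Perm (Fin (k + m + 1)),
      (((σ.symm (Fin.last (k + m)) : ℕ), k + m - (σ.symm (Fin.last (k + m)) : ℕ)) = (k, m) ↔
        σ ⟨k, by omega⟩ = Fin.last (k + m)) := fun σ => by
    rw [eq_comm (a := σ _), ← Equiv.symm_apply_eq, Prod.mk.injEq, Fin.ext_iff]
    simp only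
    omega
  simp only [hfiber, filter_filter]
  rw [sum_avoids_p132_eq_sum_glue, shiftedGenFun, shiftedGenFun, sum_mul_sum, mul_sum]
  refine sum_congr rfl fun α _ => ?_
  rw [mul_sum]
  refine sum_congr rfl fun β _ => ?_
  rw [shiftedExc_glue, shiftedCrs_glue]
  split_ifs <;> ring

end ShiftedStatistics

section Symmetry

theorem excPoints_reflect {ι : Type*} [Fintype ι] (c : ℤ) (x y : ι → ℤ) :
    excPoints (fun i => c - y i) (fun i => c - x i) = excPoints x y := by
  simp only [excPoints, sub_lt_sub_iff_left]

theorem crsPoints_reflect {ι : Type*} [Fintype ι] (c : ℤ) (x y : ι → ℤ) :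
    crsPoints (fun i => c - y i) (fun i => c - x i) = crsPoints x y := by
  unfold crsPoints
  rw [sum_comm]
  refine sum_congr rfl fun i _ => sum_congr rfl fun j _ => if_congr ?_ rfl rfl
  simp only [IsCrossing, sub_lt_sub_iff_left, sub_le_sub_iff_left]
  tauto

variable {n : ℕ}

/-- The reflection of a permutation in the antidiagonal. -/
def reflect (σ : Perm (Fin n)) : Perm (Fin n) := Fin.revPerm * σ⁻¹ * Fin.revPerm

theorem reflect_reflect (σ : Perm (Fin n)) : reflect (reflect σ) = σ := by
  ext i
  simp [reflect]

theorem reflect_apply_rev (σ : Perm (Fin n)) (i : Fin n) :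
    reflect σ (Fin.rev (σ i)) = Fin.rev i := by
  simp [reflect]

theorem shiftedExc_reflect (σ : Perm (Fin n)) : shiftedExc 0 (reflect σ) = shiftedExc 0 σ := by
  rw [shiftedExc, ← excPoints_comp_equiv (σ.trans Fin.revPerm), shiftedExc,
    ← excPoints_reflect (n - 1)]
  congr 1 <;> funext i <;> simp [reflect_apply_rev, Fin.val_rev]

theorem shiftedCrs_reflect (σ : Perm (Fin n)) : shiftedCrs 0 (reflect σ) = shiftedCrs 0 σ := by
  rw [shiftedCrs, ← crsPoints_comp_equiv (σ.trans Fin.revPerm), shiftedCrs,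
    ← crsPoints_reflect (n - 1)]
  congr 1 <;> funext i <;> simp [reflect_apply_rev, Fin.val_rev]

theorem avoids_p213_iff (σ : Perm (Fin n)) : Avoids σ p213 ↔ Avoids (reflect σ) p132 := by
  rw [avoids_p132_iff]
  constructor
  · intro h l i j hli hij hσ
    obtain ⟨l, rfl⟩ := (σ.trans Fin.revPerm).surjective l
    obtain ⟨i, rfl⟩ := (σ.trans Fin.revPerm).surjective i
    obtain ⟨j, rfl⟩ := (σ.trans Fin.revPerm).surjective j
    simp only [Equiv.trans_apply, Fin.revPerm_apply, reflect_apply_rev, Fin.rev_lt_rev]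
      at hli hij hσ
    have hcomp : σ ∘ ![i, j, l] ∘ p213.symm = ![σ j, σ i, σ l] := by
      funext a
      fin_cases a <;> rfl
    exact h <| contains_iff_strictMono_comp.mpr ⟨_, strictMono_vecCons_three hσ.2 hσ.1,
      hcomp ▸ strictMono_vecCons_three hij hli⟩
  · rintro h ⟨f, hf, hσ⟩
    refine h (Fin.rev (σ (f 2))) (Fin.rev (σ (f 0))) (Fin.rev (σ (f 1))) ?_ ?_ ?_ <;>
      simp only [reflect_apply_rev, Fin.rev_lt_rev]
    exacts [(hσ 0 2).mpr (by decide), (hσ 1 0).mpr (by decide), ⟨hf (by decide), hf (by decide)⟩]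

open scoped Classical in
theorem sum_avoids_p132 {K : Type*} [CommSemiring K] (q p : K) (n : ℕ) :
    ∑ σ : Perm (Fin n) with Avoids σ p132, q ^ exc σ * p ^ crs σ = shiftedGenFun q p n 0 := by
  simp only [shiftedGenFun, shiftedExc_zero, shiftedCrs_zero]

open scoped Classical in
theorem sum_avoids_p213 {K : Type*} [CommSemiring K] (q p : K) (n : ℕ) :
    ∑ σ : Perm (Fin n) with Avoids σ p213, q ^ exc σ * p ^ crs σ = shiftedGenFun q p n 0 := by
  refine sum_bij' (fun σ _ => reflect σ) (fun σ _ => reflect σ) ?_ ?_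
    (fun σ _ => reflect_reflect σ) (fun σ _ => reflect_reflect σ) fun σ _ => by
      rw [shiftedExc_reflect, shiftedCrs_reflect, shiftedExc_zero, shiftedCrs_zero]
  all_goals
    intro σ hσ
    simpa [avoids_p213_iff, reflect_reflect] using hσ

end Symmetry

theorem shiftedGenFun_eq_matchingSum {K : Type*} [Field K] {r : K} (hr : r ≠ 0) (q : K) (n : ℕ)
    (d : ℤ) : shiftedGenFun q (r ^ 2) n d =
      matchingSum (outwardWeight (openingFactor r) (closingFactor q r)) (1 - d - n) n := by
  induction n using Nat.strong_induction_on generalizing d with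
  | _ n ih =>
    cases n with
    | zero => rw [shiftedGenFun_zero, matchingSum]
    | succ n =>
      rw [shiftedGenFun_succ, matchingSum_succ]
      refine sum_congr rfl fun ⟨k, m⟩ hx => ?_
      obtain rfl : k + m = n := HasAntidiagonal.mem_antidiagonal.mp hx
      rw [ih k (by omega), ih m (by omega), ← outwardWeight_factors_apply hr]
      push_cast
      ring_nf

theorem map_shiftedGenFun {K L : Type*} [CommSemiring K] [CommSemiring L] (φ : K →+* L) (q p : K)
    (n : ℕ) (d : ℤ) : φ (shiftedGenFun q p n d) = shiftedGenFun (φ q) (φ p) n d := by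
  simp only [shiftedGenFun, map_sum, map_mul, map_pow]

theorem qpCatalan_add_two (n : ℕ) : qpCatalan (n + 2) = qpCatalan (n + 1) +
    MvPolynomial.X true * ∑ x ∈ antidiagonal n,
      MvPolynomial.X false ^ x.1 * qpCatalan x.1 * qpCatalan (x.2 + 1) := by
  rw [qpCatalan, sum_attach (range (n + 1)) fun k =>
    MvPolynomial.X false ^ k * qpCatalan k * qpCatalan (n + 1 - k),
    Nat.sum_antidiagonal_eq_sum_range_succ_mk]
  congr 2
  refine sum_congr rfl fun k hk => ?_
  rw [Nat.succ_sub (Nat.lt_succ_iff.mp (mem_range.mp hk))]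

theorem map_qpCatalan_eq_matchingSum {K : Type*} [Field K] {r : K} (hr : r ≠ 0)
    (φ : MvPolynomial Bool ℤ →+* K) (hφ : φ (.X false) = r ^ 2) (n : ℕ) :
    φ (qpCatalan n) = matchingSum (unfoldedWeight (φ (.X true)) r) 0 n := by
  induction n using Nat.strong_induction_on with
  | _ n ih =>
    match n with
    | 0 => simp [qpCatalan, matchingSum]
    | 1 => simp [qpCatalan, matchingSum, unfoldedWeight]
    | n + 2 =>
      rw [qpCatalan_add_two, matchingSum_unfoldedWeight_add_two hr, map_add, map_mul, map_sum,
        ih (n + 1) (by omega)]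
      congr 2
      refine sum_congr rfl fun x hx => ?_
      have hx' : x.1 + x.2 = n := HasAntidiagonal.mem_antidiagonal.mp hx
      rw [map_mul, map_mul, map_pow, hφ, ih x.1 (by omega), ih (x.2 + 1) (by omega)]

theorem shiftedGenFun_zero_eq_qpCatalan (n : ℕ) :
    shiftedGenFun (.X true : MvPolynomial Bool ℤ) (.X false) n 0 = qpCatalan n := by
  let K := AlgebraicClosure (FractionRing (MvPolynomial Bool ℤ))
  let φ : MvPolynomial Bool ℤ →+* K :=
    (algebraMap (FractionRing (MvPolynomial Bool ℤ)) K).comp (algebraMap _ _)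
  have hφ : Function.Injective φ :=
    (algebraMap (FractionRing (MvPolynomial Bool ℤ)) K).injective.comp
      (IsFractionRing.injective _ _)
  obtain ⟨r, hr⟩ := IsAlgClosed.exists_pow_nat_eq (φ (.X false)) two_pos
  have hr₀ : r ≠ 0 := by
    rintro rfl
    exact MvPolynomial.X_ne_zero false (hφ (by rw [← hr, map_zero, zero_pow two_ne_zero]))
  refine hφ ?_
  rw [map_shiftedGenFun, ← hr, shiftedGenFun_eq_matchingSum hr₀, sub_zero,
    matchingSum_outwardWeight_factors, map_qpCatalan_eq_matchingSum hr₀ φ hr.symm]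

open scoped Classical in
open MvPolynomial in
/-- For `τ ∈ {132, 213}`: `Σ_{σ ∈ S_n(τ)} q^{exc σ} p^{crs σ} = C_n(q,p)`. -/
theorem sum_exc_crs_avoid_eq_qpCatalan (n : ℕ) (τ : Equiv.Perm (Fin 3))
    (hτ : τ = p132 ∨ τ = p213) :
    ∑ σ ∈ Finset.univ.filter (fun σ : Equiv.Perm (Fin n) => Avoids σ τ),
      (X true : MvPolynomial Bool ℤ) ^ (exc σ) * (X false : MvPolynomial Bool ℤ) ^ (crs σ)
      = qpCatalan n := by
  rcases hτ with rfl | rfl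
  · rw [sum_avoids_p132, shiftedGenFun_zero_eq_qpCatalan]
  · rw [sum_avoids_p213, shiftedGenFun_zero_eq_qpCatalan]
end

section
/- Let I_n(q) = Σ_{σ ∈ S_n(321)} q^{inv(σ)}. Then I_n(q) = C_n(q,q) for all n ≥ 0, and consequently for all n ≥ 2 the recurrence I_n(q) = I_{n−1}(q) + Σ_{k=0}^{n−2} q^{k+1} I_k(q) I_{n−1−k}(q) holds as an identity of polynomials in q. -/
open Equiv Finset

open scoped Classical in
/-- `I_n(q) = Σ_{σ ∈ S_n(321)} q^{inv σ}` as a one-variable polynomial. -/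
noncomputable def Ipoly (n : ℕ) : Polynomial ℤ :=
  ∑ σ ∈ Finset.univ.filter (fun σ : Equiv.Perm (Fin n) => Avoids σ p321),
    (Polynomial.X : Polynomial ℤ) ^ (invStat σ)

/-!
Build 321-avoiding permutations by prepending a first value. This is compatible with pattern
avoidance exactly when the new value `a` is at most the *initial run*, the number of smallest
values that occur in increasing order; it creates `a` inversions and turns the initial run `m` into
`m + 1` if `a = 0` and into `a` otherwise. Hence `I_n(q)` is obtained by iterating the operator
`f ↦ (m ↦ f (m + 1) + ∑ 1 ≤ a ≤ m, q ^ a * f a)`, and the generating functions `G m` of this tree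
solve `G m = 1 + z * (G (m + 1) + ∑ 1 ≤ a ≤ m, q ^ a * G a)`.

A `q`-binomial transform `R ↦ G` with `G 0 = R 0` converts this system, in which `m` can jump, into
the nearest-neighbour system `R h = q ^ h * z * (R (h - 1) + 2 * R h + R (h + 1))`, `h ≥ 1`, of
2-coloured Motzkin paths weighted by area. The latter is solved by first passages: a path from
height `h` to `0` is a product of descents from `j + 1` to `j` followed by a path from `0` to `0`,
and each factor is expressed through the series of `C_n(q, q)` with `z` rescaled by powers of `q`.
-/

/-! ### The initial run and prepending a value -/

section InitialRun

variable {n : ℕ} {a : Fin (n + 1)} {σ : Perm (Fin n)}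

theorem p321_apply (i : Fin 3) : p321 i = i.rev := by
  revert i
  decide

theorem contains_p321_iff :
    Contains σ p321 ↔ ∃ i j k, i < j ∧ j < k ∧ σ k < σ j ∧ σ j < σ i := by
  simp only [Contains, p321_apply, Fin.rev_lt_rev]
  constructor
  · rintro ⟨f, hf, h⟩
    exact ⟨f 0, f 1, f 2, hf (by decide), hf (by decide), (h _ _).mpr (by decide),
      (h _ _).mpr (by decide)⟩
  · rintro ⟨i, j, k, hij, hjk, hkj, hji⟩
    have hanti : StrictAnti (σ ∘ ![i, j, k]) := by
      simp [Fin.strictAnti_iff_succ_lt, Fin.forall_fin_two, hkj, hji]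
    refine ⟨![i, j, k], ?_, fun x y => hanti.lt_iff_gt⟩
    simp [Fin.strictMono_iff_lt_succ, Fin.forall_fin_two, hij, hjk]

/-- The values of `σ` smaller than `b` occur in increasing order; equivalently, the larger entry of
every inversion is at least `b`. -/
def IncreasingBelow (σ : Perm (Fin n)) (b : ℕ) : Prop :=
  ∀ i j, i < j → σ j < σ i → b ≤ σ i

theorem IncreasingBelow.mono {b c : ℕ} (h : IncreasingBelow σ c) (hbc : b ≤ c) :
    IncreasingBelow σ b :=
  fun i j hij hji => hbc.trans (h i j hij hji)

theorem not_increasingBelow_iff {b : ℕ} :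
    ¬ IncreasingBelow σ b ↔ ∃ i j, i < j ∧ σ j < σ i ∧ σ i < b := by
  simp [IncreasingBelow]

open scoped Classical in
/-- The number of smallest values that occur in increasing order in `σ`. Bounding it by `n` only
matters for the identity permutation, which is `IncreasingBelow` every `b`. -/
noncomputable def initialRun (σ : Perm (Fin n)) : ℕ :=
  Nat.findGreatest (IncreasingBelow σ) n

theorem le_initialRun_iff {b : ℕ} : b ≤ initialRun σ ↔ b ≤ n ∧ IncreasingBelow σ b := by
  classical
  refine ⟨fun h => ⟨h.trans (Nat.findGreatest_le n), ?_⟩, fun h => Nat.le_findGreatest h.1 h.2⟩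
  have hrun : IncreasingBelow σ (initialRun σ) :=
    Nat.findGreatest_spec (P := IncreasingBelow σ) n.zero_le fun _ _ _ _ => Nat.zero_le _
  exact hrun.mono h

theorem le_initialRun_iff_increasingBelow : (a : ℕ) ≤ initialRun σ ↔ IncreasingBelow σ a := by
  simp [le_initialRun_iff, a.is_le]

/-- The permutation with first value `a` whose remaining values are order-isomorphic to `σ`. -/
def consPerm (a : Fin (n + 1)) (σ : Perm (Fin n)) : Perm (Fin (n + 1)) :=
  (finSuccEquiv n).trans ((optionCongr σ).trans (finSuccEquiv' a).symm)

@[simp]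
theorem consPerm_zero (a : Fin (n + 1)) (σ : Perm (Fin n)) : consPerm a σ 0 = a := by
  simp [consPerm]

@[simp]
theorem consPerm_succ (a : Fin (n + 1)) (σ : Perm (Fin n)) (i : Fin n) :
    consPerm a σ i.succ = a.succAbove (σ i) := by
  simp [consPerm]

variable (n) in
theorem consPerm_bijective :
    Function.Bijective fun x : Fin (n + 1) × Perm (Fin n) => consPerm x.1 x.2 := by
  rw [Fintype.bijective_iff_injective_and_card]
  refine ⟨?_, by simp [Fintype.card_perm, Nat.factorial_succ]⟩
  rintro ⟨a, σ⟩ ⟨b, τ⟩ h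
  obtain rfl : a = b := by simpa using DFunLike.congr_fun h 0
  refine Prod.ext rfl (Equiv.ext fun i => ?_)
  simpa using DFunLike.congr_fun h i.succ

theorem card_filter_succAbove_lt (a : Fin (n + 1)) : #{i | a.succAbove i < a} = (a : ℕ) := by
  simp only [Fin.succAbove_lt_iff_castSucc_lt]
  simp only [Fin.lt_def, Fin.val_castSucc]
  rw [Fin.card_filter_val_lt, min_eq_right a.is_le]

theorem invStat_consPerm (a : Fin (n + 1)) (σ : Perm (Fin n)) :
    invStat (consPerm a σ) = a + invStat σ := by
  have invStat_eq_sum {m : ℕ} (τ : Perm (Fin m)) :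
      invStat τ = ∑ i, ∑ j, if i < j ∧ τ j < τ i then 1 else 0 := by
    rw [invStat, card_filter, ← univ_product_univ, sum_product]
  have first_row : (∑ j, if a.succAbove (σ j) < a then 1 else 0) = (a : ℕ) := by
    rw [Equiv.sum_comp σ fun j => if a.succAbove j < a then 1 else 0, ← card_filter,
      card_filter_succAbove_lt]
  simp only [invStat_eq_sum, Fin.sum_univ_succ, consPerm_zero, consPerm_succ, Fin.succ_pos,
    Fin.not_lt_zero, Fin.succ_lt_succ_iff, Fin.succAbove_lt_succAbove_iff, true_and, false_and,
    if_false, zero_add, first_row]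

theorem contains_consPerm_iff :
    Contains (consPerm a σ) p321 ↔ Contains σ p321 ∨ ¬ IncreasingBelow σ a := by
  rw [or_comm]
  -- A 321 starting at the prepended value `a` is `a` followed by an inversion of values below `a`.
  simp only [contains_p321_iff, not_increasingBelow_iff, Fin.exists_fin_succ, exists_and_left,
    exists_and_right, consPerm_zero, consPerm_succ, Fin.not_lt_zero, Fin.succ_pos,
    Fin.succ_lt_succ_iff, Fin.succAbove_lt_succAbove_iff, false_and, false_or, true_and,
    Fin.succAbove_lt_iff_castSucc_lt]
  rfl

theorem avoids_consPerm_iff :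
    Avoids (consPerm a σ) p321 ↔ Avoids σ p321 ∧ (a : ℕ) ≤ initialRun σ := by
  rw [Avoids, Avoids, contains_consPerm_iff, not_or, not_not, le_initialRun_iff_increasingBelow]

theorem increasingBelow_consPerm_zero {b : ℕ} :
    IncreasingBelow (consPerm 0 σ) b ↔ IncreasingBelow σ (b - 1) := by
  simp [IncreasingBelow, Fin.forall_fin_succ]

theorem increasingBelow_consPerm_of_ne_zero {b : ℕ} (ha : a ≠ 0) (hσ : IncreasingBelow σ a) :
    IncreasingBelow (consPerm a σ) b ↔ b ≤ a := by
  constructor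
  · intro h
    obtain ⟨x, hx⟩ := (consPerm a σ).surjective 0
    have hx0 : x ≠ 0 := by
      rintro rfl
      exact ha (by simpa using hx)
    simpa using h 0 x (Fin.pos_of_ne_zero hx0) (by simpa [hx] using Fin.pos_of_ne_zero ha)
  · intro hb
    refine IncreasingBelow.mono (fun i j hij hji => ?_) hb
    obtain ⟨j, rfl⟩ := Fin.exists_succ_eq.mpr (Fin.ne_zero_of_lt hij)
    cases i using Fin.cases with
    | zero => simp
    | succ i =>
      have h : a ≤ (σ i).castSucc := hσ i j (by simpa using hij) (by simpa using hji)
      rw [consPerm_succ, ← Fin.le_def]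
      exact (Fin.lt_succAbove_iff_le_castSucc a (σ i)).mpr h |>.le

theorem initialRun_consPerm (ha : (a : ℕ) ≤ initialRun σ) :
    initialRun (consPerm a σ) = if (a : ℕ) = 0 then initialRun σ + 1 else (a : ℕ) := by
  refine eq_of_forall_le_iff fun b => ?_
  rw [le_initialRun_iff]
  split_ifs with h
  · obtain rfl : a = 0 := Fin.ext h
    rw [increasingBelow_consPerm_zero, ← Nat.sub_le_iff_le_add, ← Nat.sub_le_iff_le_add,
      le_initialRun_iff]
  · rw [increasingBelow_consPerm_of_ne_zero (mt (congrArg Fin.val) h)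
      (le_initialRun_iff_increasingBelow.mp ha)]
    exact and_iff_right_of_imp fun hb => hb.trans a.is_lt.le

end InitialRun

/-! ### The generating tree -/

section GeneratingTree

variable {A : Type*} [CommSemiring A]

/-- One step of the generating tree of 321-avoiding permutations, acting on functions of the label:
a node labelled `m` has a child labelled `m + 1` of weight `1` and, for `1 ≤ a ≤ m`, a child
labelled `a` of weight `q ^ a`. -/
def treeStep (q : A) (f : ℕ → A) (m : ℕ) : A :=
  f (m + 1) + ∑ a ∈ range m, q ^ (a + 1) * f (a + 1)

theorem sum_initialRun_consPerm {n : ℕ} (q : A) (f : ℕ → A) (σ : Perm (Fin n)) :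
    (∑ a : Fin (n + 1),
      if (a : ℕ) ≤ initialRun σ then q ^ (a : ℕ) * f (initialRun (consPerm a σ)) else 0)
      = treeStep q f (initialRun σ) := by
  set m := initialRun σ with hm
  have hmn : m ≤ n := (le_initialRun_iff.mp hm.le).1
  have hrange : (range (n + 1)).filter (· ≤ m) = range (m + 1) := by
    ext a
    simp only [mem_filter, mem_range]
    omega
  calc
    _ = ∑ a : Fin (n + 1),
          if (a : ℕ) ≤ m then q ^ (a : ℕ) * f (if (a : ℕ) = 0 then m + 1 else a) else 0 :=
        sum_congr rfl fun a _ => ite_congr rfl (fun h => by rw [initialRun_consPerm h]) fun _ => rfl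
    _ = ∑ a ∈ range (m + 1), q ^ a * f (if a = 0 then m + 1 else a) := by
        rw [Fin.sum_univ_eq_sum_range fun a =>
          if a ≤ m then q ^ a * f (if a = 0 then m + 1 else a) else 0, ← sum_filter, hrange]
    _ = treeStep q f m := by
        rw [sum_range_succ', add_comm]
        simp [treeStep]

open scoped Classical in
/-- The enumerator of 321-avoiding permutations of `Fin n` by inversions, with a further weight
`f` evaluated at the initial run. -/
noncomputable def inversionEnumerator (q : A) (n : ℕ) (f : ℕ → A) : A :=
  ∑ σ : Perm (Fin n) with Avoids σ p321, q ^ invStat σ * f (initialRun σ)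

theorem inversionEnumerator_zero (q : A) (f : ℕ → A) : inversionEnumerator q 0 f = f 0 := by
  have havoid (σ : Perm (Fin 0)) : Avoids σ p321 := by simp [Avoids, contains_p321_iff]
  simp [inversionEnumerator, havoid, initialRun, invStat]

theorem inversionEnumerator_succ (q : A) (n : ℕ) (f : ℕ → A) :
    inversionEnumerator q (n + 1) f = inversionEnumerator q n (treeStep q f) := by
  classical
  rw [inversionEnumerator, sum_filter, ← (consPerm_bijective n).sum_comp,
    Fintype.sum_prod_type_right, inversionEnumerator, sum_filter]
  refine sum_congr rfl fun σ _ => ?_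
  by_cases hσ : Avoids σ p321
  · simp only [avoids_consPerm_iff, hσ, true_and, if_true, invStat_consPerm]
    rw [← sum_initialRun_consPerm, mul_sum]
    refine sum_congr rfl fun a _ => ?_
    rw [mul_ite, mul_zero]
    exact ite_congr rfl (fun _ => by ring) fun _ => rfl
  · simp [avoids_consPerm_iff, hσ]

theorem inversionEnumerator_eq_iterate (q : A) (n : ℕ) (f : ℕ → A) :
    inversionEnumerator q n f = (treeStep q)^[n] f 0 := by
  induction n generalizing f with
  | zero => exact inversionEnumerator_zero q f
  | succ n ih => rw [inversionEnumerator_succ, ih, Function.iterate_succ_apply]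

open PowerSeries in
theorem coeff_eq_iterate_treeStep {q : A} {G : ℕ → A⟦X⟧}
    (hG : ∀ m, G m = 1 + X * treeStep (C q) G m) (n m : ℕ) :
    coeff n (G m) = (treeStep q)^[n] 1 m := by
  induction n generalizing m with
  | zero =>
    rw [hG m]
    simp
  | succ n ih =>
    rw [Function.iterate_succ_apply', hG m]
    simp [treeStep, coeff_succ_X_mul, coeff_one, ← map_pow, coeff_C_mul, ih]

end GeneratingTree

/-! ### The `q`-binomial transform -/

section QBinomialTransform

variable {A : Type*} [CommSemiring A]

/-- The transform `f ↦ ∑ h, q ^ (h.choose 2) * [m choose h]_q * f h`, where `[m choose h]_q` is the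
Gaussian binomial coefficient, defined through the `q`-Pascal rule. -/
def qBinomTransform (q : A) : ℕ → (ℕ → A) →ₗ[A] A
  | 0 => LinearMap.proj 0
  | m + 1 => qBinomTransform q m + q ^ m • qBinomTransform q m ∘ₗ LinearMap.funLeft A A Nat.succ

@[simp]
theorem qBinomTransform_zero (q : A) (f : ℕ → A) : qBinomTransform q 0 f = f 0 :=
  rfl

theorem qBinomTransform_succ (q : A) (m : ℕ) (f : ℕ → A) :
    qBinomTransform q (m + 1) f
      = qBinomTransform q m f + q ^ m * qBinomTransform q m fun h => f (h + 1) :=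
  rfl

theorem qBinomTransform_mul_left (q c : A) (m : ℕ) (f : ℕ → A) :
    (qBinomTransform q m fun h => c * f h) = c * qBinomTransform q m f :=
  map_smul (qBinomTransform q m) c f

theorem qBinomTransform_succ' (q : A) (m : ℕ) (f : ℕ → A) :
    qBinomTransform q (m + 1) f = qBinomTransform q m fun h => q ^ h * (f h + f (h + 1)) := by
  induction m generalizing f with
  | zero => simp [qBinomTransform_succ]
  | succ m ih =>
    have hshift : (qBinomTransform q m fun h => q ^ (h + 1) * (f (h + 1) + f (h + 2)))
        = q * qBinomTransform q m fun h => q ^ h * (f (h + 1) + f (h + 2)) := by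
      simp only [pow_succ', mul_assoc, qBinomTransform_mul_left]
    rw [qBinomTransform_succ, ih f, ih fun h => f (h + 1),
      qBinomTransform_succ q m fun h => q ^ h * (f h + f (h + 1)), hshift]
    ring

/-- The linear system satisfied by the generating functions `R h` (in `z`, by length) of
2-coloured Motzkin paths from height `h` to height `0` with one colour only for level steps at
height `0`, where a step starting at height `h` has weight `q ^ h`. -/
structure IsMotzkinSystem (q z : A) (R : ℕ → A) : Prop where
  zero : R 0 = 1 + z * (R 0 + R 1)
  succ (h : ℕ) : R (h + 1) = q ^ (h + 1) * z * (R h + 2 * R (h + 1) + R (h + 2))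

theorem IsMotzkinSystem.qBinomTransform_shift {q z : A} {R : ℕ → A} (hR : IsMotzkinSystem q z R)
    (m : ℕ) :
    (qBinomTransform q m fun h => R (h + 1))
      = q * z * (qBinomTransform q (m + 1) R + qBinomTransform q (m + 1) fun h => R (h + 1)) := by
  have hshift : (fun h => R (h + 1))
      = fun h => q * z * (q ^ h * ((R h + R (h + 1)) + (R (h + 1) + R (h + 2)))) := by
    funext h
    exact (hR.succ h).trans (by ring)
  calc
    _ = q * z * qBinomTransform q (m + 1) fun h => R h + R (h + 1) := by
        rw [hshift, qBinomTransform_mul_left, qBinomTransform_succ']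
    _ = _ := by
        rw [← map_add]
        rfl

theorem IsMotzkinSystem.qBinomTransform_eq {q z : A} {R : ℕ → A} (hR : IsMotzkinSystem q z R)
    (m : ℕ) :
    qBinomTransform q m R = 1 + z * treeStep q (fun k => qBinomTransform q k R) m := by
  induction m with
  | zero => simpa [treeStep, qBinomTransform_succ] using hR.zero
  | succ m ih =>
    rw [qBinomTransform_succ, hR.qBinomTransform_shift, ih]
    simp only [treeStep, sum_range_succ, qBinomTransform_succ q (m + 1)]
    ring

end QBinomialTransform

/-! ### The diagonal Catalan numbers -/

section DiagCatalan

variable {A : Type*} [CommRing A]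

/-- The value of the `q,p`-Catalan polynomial `C_n(q, p)` at `p = q`, for an element `q` of any
commutative ring. -/
noncomputable def diagCatalan (q : A) (n : ℕ) : A :=
  MvPolynomial.aeval (fun _ : Bool => q) (qpCatalan n)

theorem diagCatalan_zero (q : A) : diagCatalan q 0 = 1 := by
  simp [diagCatalan, qpCatalan]

theorem diagCatalan_succ (q : A) (n : ℕ) :
    diagCatalan q (n + 1) = diagCatalan q n
      + ∑ k ∈ range n, q ^ (k + 1) * diagCatalan q k * diagCatalan q (n - k) := by
  cases n with
  | zero => simp [diagCatalan, qpCatalan]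
  | succ n =>
    have hattach := sum_attach (range (n + 1)) fun k =>
      (MvPolynomial.X false : MvPolynomial Bool ℤ) ^ k * qpCatalan k * qpCatalan (n + 1 - k)
    rw [diagCatalan, qpCatalan, hattach]
    simp only [diagCatalan, map_add, map_mul, map_sum, map_pow,
      MvPolynomial.aeval_X, mul_sum, pow_succ', mul_assoc]

open PowerSeries

/-- The generating function of the `C_n(q, q)`. -/
noncomputable def diagCatalanSeries (q : A) : A⟦X⟧ :=
  .mk (diagCatalan q)

/-- The series `1 / (1 - z * C(z))` of sequences of objects counted by `z * C(z)`, where `C` is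
`diagCatalanSeries q`. -/
noncomputable def diagCatalanSeqSeries (q : A) : A⟦X⟧ :=
  invOfUnit (1 - X * diagCatalanSeries q) 1

theorem diagCatalanSeqSeries_eq (q : A) :
    diagCatalanSeqSeries q = 1 + X * diagCatalanSeries q * diagCatalanSeqSeries q := by
  have hinv : (1 - X * diagCatalanSeries q) * diagCatalanSeqSeries q = 1 :=
    mul_invOfUnit _ _ (by simp)
  linear_combination hinv

theorem mk_diagCatalan_succ (q : A) :
    PowerSeries.mk (fun n => diagCatalan q (n + 1)) = diagCatalanSeries q
      + X * (C q * rescale q (diagCatalanSeries q)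
        * PowerSeries.mk fun n => diagCatalan q (n + 1)) := by
  ext n
  cases n with
  | zero => simp [diagCatalanSeries, diagCatalan_succ]
  | succ n =>
    rw [map_add, coeff_succ_X_mul, mul_assoc, coeff_C_mul, coeff_mul,
      Nat.sum_antidiagonal_eq_sum_range_succ_mk, mul_sum]
    simp only [diagCatalanSeries, coeff_mk, coeff_rescale, diagCatalan_succ q (n + 1)]
    congr 1
    refine sum_congr rfl fun k hk => ?_
    rw [Nat.sub_add_comm (mem_range_succ_iff.mp hk)]
    ring

theorem diagCatalanSeries_eq (q : A) :
    diagCatalanSeries q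
      = 1 + X * diagCatalanSeries q * rescale q (diagCatalanSeqSeries q) := by
  set T : A⟦X⟧ := .mk fun n => diagCatalan q (n + 1)
  have hT : diagCatalanSeries q = 1 + X * T := by
    rw [add_comm]
    simpa [diagCatalanSeries, diagCatalan_zero] using eq_X_mul_shift_add_const (diagCatalanSeries q)
  have hseq := congrArg (rescale q) (diagCatalanSeqSeries_eq q)
  simp only [map_add, map_mul, map_one, rescale_X] at hseq
  have hTI : T = diagCatalanSeries q + X * (C q * rescale q (diagCatalanSeries q) * T) :=
    mk_diagCatalan_succ q
  have hTB : T = diagCatalanSeries q * rescale q (diagCatalanSeqSeries q) := by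
    linear_combination rescale q (diagCatalanSeqSeries q) * hTI - T * hseq
  rw [mul_assoc, ← hTB, ← hT]

/-- The series `R h` of 2-coloured Motzkin paths from height `h` to `0`, as a product over first
passages: the `j`-th factor counts the paths from `j + 1` to `j` that reach `j` only at the end. -/
noncomputable def motzkinSeries (q : A) (h : ℕ) : A⟦X⟧ :=
  diagCatalanSeries q * ∏ j ∈ range h, (rescale (q ^ (j + 1)) (diagCatalanSeqSeries q) - 1)

theorem motzkinSeries_zero (q : A) : motzkinSeries q 0 = diagCatalanSeries q := by
  simp [motzkinSeries]

theorem motzkinSeries_succ (q : A) (h : ℕ) :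
    motzkinSeries q (h + 1)
      = motzkinSeries q h * (rescale (q ^ (h + 1)) (diagCatalanSeqSeries q) - 1) := by
  rw [motzkinSeries, motzkinSeries, prod_range_succ, mul_assoc]

theorem diagCatalanSeqSeries_sub_one (q : A) :
    diagCatalanSeqSeries q - 1 = X * (diagCatalanSeqSeries q
      + (diagCatalanSeqSeries q - 1) * rescale q (diagCatalanSeqSeries q)) := by
  have hI := diagCatalanSeries_eq q
  have hB := diagCatalanSeqSeries_eq q
  linear_combination (1 - X * rescale q (diagCatalanSeqSeries q)) * hB
    + X * diagCatalanSeqSeries q * hI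

theorem isMotzkinSystem_motzkinSeries (q : A) : IsMotzkinSystem (C q) X (motzkinSeries q) where
  zero := by
    rw [motzkinSeries_succ, motzkinSeries_zero, zero_add, pow_one]
    linear_combination diagCatalanSeries_eq q
  succ h := by
    have hscaled := congrArg (rescale (q ^ (h + 1))) (diagCatalanSeqSeries_sub_one q)
    simp only [map_sub, map_add, map_mul, map_one, rescale_X, rescale_rescale, ← pow_succ',
      map_pow] at hscaled
    rw [motzkinSeries_succ q (h + 1), motzkinSeries_succ q h]
    linear_combination motzkinSeries q h * hscaled

theorem inversionEnumerator_one (q : A) (n : ℕ) :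
    inversionEnumerator q n 1 = diagCatalan q n := by
  rw [inversionEnumerator_eq_iterate,
    ← coeff_eq_iterate_treeStep (isMotzkinSystem_motzkinSeries q).qBinomTransform_eq,
    qBinomTransform_zero, motzkinSeries_zero, diagCatalanSeries, coeff_mk]

end DiagCatalan

theorem Ipoly_eq_diagCatalan (n : ℕ) : Ipoly n = diagCatalan Polynomial.X n := by
  rw [← inversionEnumerator_one]
  simp [Ipoly, inversionEnumerator]

/-- `I_n(q) = C_n(q,q)` for all `n`, and consequently `I_n` satisfies the recurrence
`I_n(q) = I_{n-1}(q) + Σ_{k=0}^{n-2} q^{k+1} I_k(q) I_{n-1-k}(q)` for all `n ≥ 2`. -/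
theorem Ipoly_eq_qpCatalan_diag_and_recurrence :
    (∀ n : ℕ, Ipoly n
        = MvPolynomial.aeval (fun _ : Bool => (Polynomial.X : Polynomial ℤ)) (qpCatalan n)) ∧
    (∀ n : ℕ, 2 ≤ n → Ipoly n = Ipoly (n - 1)
        + ∑ k ∈ Finset.range (n - 1),
            (Polynomial.X : Polynomial ℤ) ^ (k + 1) * Ipoly k * Ipoly (n - 1 - k)) := by
  refine ⟨Ipoly_eq_diagCatalan, fun n hn => ?_⟩
  obtain ⟨m, rfl⟩ := Nat.exists_eq_add_of_le' hn
  simp only [Ipoly_eq_diagCatalan]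
  exact diagCatalan_succ Polynomial.X (m + 1)
end
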